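/- arXiv:1602.01678 — 2 statements merged into one kernel-verified Lean document; each statement's English description precedes it below -/
import Mathlib

section
/- (Eqs. (4.11)/(4.13): expansion of X.) Under the stated hypotheses, the following pointwise identity holds on ℝ⁴: X = Y·(1 − 𝒜), where 𝒜 := (f f̄)⁻¹ · Ȳ · (A Y + B). Equivalently, X = −(c/(2f))·(1 − 𝒜), i.e. the constrained scalar X = c/(2F) equals its lowest-order value Y = −c/(2f) corrected by the single nilpotent factor 𝒜 = (χ̄²/(2 f f̄²))·(A(χ²/(2f)) − B). -/
open scoped BigOperators

/-- Partial derivative of a `Λ`-valued function on `ℝ⁴` in the `i`-th coordinate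
direction. -/
noncomputable def pd {Λ : Type*} [NormedAddCommGroup Λ] [NormedSpace ℝ Λ]
    (i : Fin 4) (u : (Fin 4 → ℝ) → Λ) : (Fin 4 → ℝ) → Λ :=
  fun x => fderiv ℝ u x (Pi.single i 1)

/-- The second-order kinetic operator
`A u = e⁻¹ ∂_μ (e g^{μν} ∂_ν u) + i t^μ ∂_μ u + (i/2) e⁻¹ ∂_μ (e t^μ) u + r u`
of eq. (4.2). The conjugate operator `Ā` is `Aop e g (-t) r`. -/
noncomputable def Aop {Λ : Type*} [NormedCommRing Λ] [NormedAlgebra ℂ Λ]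
    (e : (Fin 4 → ℝ) → ℝ) (g : (Fin 4 → ℝ) → Fin 4 → Fin 4 → ℝ)
    (t : (Fin 4 → ℝ) → Fin 4 → ℝ) (r : (Fin 4 → ℝ) → ℝ)
    (u : (Fin 4 → ℝ) → Λ) : (Fin 4 → ℝ) → Λ :=
  fun x =>
    (e x)⁻¹ • (∑ μ : Fin 4, pd μ (fun y => e y • ∑ ν : Fin 4, g y μ ν • pd ν u y) x)
      + Complex.I • (∑ μ : Fin 4, t x μ • pd μ u x)
      + ((2 : ℝ)⁻¹ * (e x)⁻¹ *
          ∑ μ : Fin 4, fderiv ℝ (fun y => e y * t y μ) x (Pi.single μ 1)) •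
          (Complex.I • u x)
      + r x • u x

/-!
A differential operator `L` of order two satisfies `L (u v) = u L v + v L u + Γ (u, v) - u v L 1`
with `Γ` a derivation in each argument. If `c² = 0`, this forces `c L (c u) = c u L c`: in front of
`c`, the operator only sees the value of `u`. Since `X̄` is a multiple of `c̄`, the equation of
motion for `F` gives `c̄ (F + f) = 0`, that is `c̄ F⁻¹ = -c̄ f⁻¹`; likewise `c F̄⁻¹ = -c f̄⁻¹`. Hence
every `F` and `F̄` in the correction term of `c F⁻¹ = -c f⁻¹ + c F⁻¹ f⁻¹ (F + f)` may be traded for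
`-f` and `-f̄`, including the one under `A`.
-/

section RingInverse

open Asymptotics ContinuousLinearMap Filter Topology UniformSpace
open scoped Ring

theorem mul_ringInverse_eq_neg_of_mul_add_eq_zero {R : Type*} [CommRing R] {a b z : R}
    (ha : IsUnit a) (hb : IsUnit b) (h : z * (a + b) = 0) : z * a⁻¹ʳ = -(z * b⁻¹ʳ) := by
  have hab : a⁻¹ʳ + b⁻¹ʳ = a⁻¹ʳ * (a + b) * b⁻¹ʳ := Ring.inverse_add_inverse (iff_of_true ha hb)
  linear_combination z * hab + a⁻¹ʳ * b⁻¹ʳ * h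

theorem mul_ringInverse_eq_of_add_eq_mul {R : Type*} [CommRing R] {c cb f fb F Fb a a' : R}
    (hf : IsUnit f) (hF : IsUnit F) (hFf : F + f = cb * Fb⁻¹ʳ * Fb⁻¹ʳ * a)
    (hcbF : cb * F⁻¹ʳ = -(cb * f⁻¹ʳ)) (hcFb : c * Fb⁻¹ʳ = -(c * fb⁻¹ʳ))
    (ha : cb * (c * a) = cb * (c * a')) :
    c * F⁻¹ʳ = -(c * f⁻¹ʳ) * (1 - (f * fb)⁻¹ʳ * (-(cb * fb⁻¹ʳ) * a')) := by
  have hFf' : F⁻¹ʳ + f⁻¹ʳ = F⁻¹ʳ * (F + f) * f⁻¹ʳ :=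
    Ring.inverse_add_inverse (iff_of_true hF hf)
  calc c * F⁻¹ʳ = -(c * f⁻¹ʳ) + c * f⁻¹ʳ * (cb * F⁻¹ʳ) * Fb⁻¹ʳ ^ 2 * a := by
        linear_combination c * hFf' + c * F⁻¹ʳ * f⁻¹ʳ * hFf
    _ = -(c * f⁻¹ʳ) - f⁻¹ʳ ^ 2 * cb * (c * Fb⁻¹ʳ) * Fb⁻¹ʳ * a := by
        linear_combination c * f⁻¹ʳ * Fb⁻¹ʳ ^ 2 * a * hcbF
    _ = -(c * f⁻¹ʳ) + f⁻¹ʳ ^ 2 * cb * fb⁻¹ʳ * (c * Fb⁻¹ʳ) * a := by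
        linear_combination -(f⁻¹ʳ ^ 2 * cb * Fb⁻¹ʳ * a) * hcFb
    _ = -(c * f⁻¹ʳ) - f⁻¹ʳ ^ 2 * fb⁻¹ʳ ^ 2 * (cb * (c * a)) := by
        linear_combination f⁻¹ʳ ^ 2 * cb * fb⁻¹ʳ * a * hcFb
    _ = -(c * f⁻¹ʳ) * (1 - (f * fb)⁻¹ʳ * (-(cb * fb⁻¹ʳ) * a')) := by
        rw [ha, Ring.mul_inverse_rev]; ring

theorem map_ringInverse_of_isUnit {M N Φ : Type*} [MonoidWithZero M] [MonoidWithZero N]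
    [FunLike Φ M N] [MonoidHomClass Φ M N] (φ : Φ) {a : M} (ha : IsUnit a) :
    φ a⁻¹ʳ = (φ a)⁻¹ʳ := by
  obtain ⟨u, rfl⟩ := ha
  rw [Ring.inverse_unit, ← MonoidHom.coe_coe φ, ← Units.coe_map, ← Units.coe_map,
    Ring.inverse_unit, map_inv]

-- In the completion, inversion is continuous at units by the geometric series.
theorem continuousOn_ringInverse {R : Type*} [NormedRing R] :
    ContinuousOn Ring.inverse {a : R | IsUnit a} := by
  have hcoe : IsInducing ((↑) : R → Completion R) :=
    (Completion.isUniformInducing_coe R).isInducing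
  rw [hcoe.continuousOn_iff]
  have hcomp : ContinuousOn (fun a : R => (a : Completion R)⁻¹ʳ) {a | IsUnit a} := by
    intro a ha
    obtain ⟨v, hv⟩ : IsUnit (a : Completion R) := ha.map Completion.coeRingHom
    have hinv := NormedRing.inverse_continuousAt v
    rw [hv] at hinv
    exact (hinv.comp (Completion.continuous_coe R).continuousAt).continuousWithinAt
  exact hcomp.congr fun a ha => map_ringInverse_of_isUnit Completion.coeRingHom ha

variable {𝕜 E R : Type*} [NontriviallyNormedField 𝕜] [NormedAddCommGroup E] [NormedSpace 𝕜 E]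
  [NormedRing R] [NormedAlgebra 𝕜 R] {F : E → R}

theorem continuousAt_ringInverse_comp {α : Type*} [TopologicalSpace α] {F : α → R} {x : α}
    (hF : ContinuousAt F x) (hU : ∀ᶠ y in 𝓝 x, IsUnit (F y)) :
    ContinuousAt (fun y => (F y)⁻¹ʳ) x :=
  (continuousOn_ringInverse (F x) hU.self_of_nhds).tendsto.comp
    (tendsto_nhdsWithin_iff.2 ⟨hF, hU⟩)

-- The units of an incomplete ring need not be a neighbourhood of each of their points, so one
-- differentiates `F⁻¹` along a family `F` of units rather than inversion itself.
theorem hasFDerivAt_ringInverse_comp {F' : E →L[𝕜] R} {x : E} (hF : HasFDerivAt F F' x)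
    (hU : ∀ᶠ y in 𝓝 x, IsUnit (F y)) :
    HasFDerivAt (fun y => (F y)⁻¹ʳ) (-(mulLeftRight 𝕜 R (F x)⁻¹ʳ (F x)⁻¹ʳ ∘L F')) x := by
  have hcont := continuousAt_ringInverse_comp hF.continuousAt hU
  have hG : (fun y => (F y)⁻¹ʳ) =O[𝓝 x] fun _ => (1 : ℝ) := hcont.tendsto.isBigO_one ℝ
  have hΔG : (fun y => (F y)⁻¹ʳ - (F x)⁻¹ʳ) =o[𝓝 x] fun _ => (1 : ℝ) :=
    (isLittleO_one_iff ℝ).2 (tendsto_sub_nhds_zero_iff.2 hcont.tendsto)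
  have hF'G : (fun y => F' (y - x) * ((F y)⁻¹ʳ - (F x)⁻¹ʳ)) =o[𝓝 x] fun y => y - x := by
    simpa using (F'.isBigO_sub (𝓝 x) x).norm_right.mul_isLittleO hΔG
  have hFG : (fun y => (F y - F x - F' (y - x)) * (F y)⁻¹ʳ) =o[𝓝 x] fun y => y - x := by
    simpa using hF.isLittleO.norm_right.mul_isBigO hG
  refine .of_isLittleO <| ((hFG.add hF'G).const_mul_left (-(F x)⁻¹ʳ)).congr' ?_ .rfl
  filter_upwards [hU] with y hy
  have hΔ : (F y)⁻¹ʳ - (F x)⁻¹ʳ = -((F x)⁻¹ʳ * (F y - F x) * (F y)⁻¹ʳ) := by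
    rw [← Ring.inverse_sub_inverse (iff_of_true hU.self_of_nhds hy), neg_sub]
  calc -(F x)⁻¹ʳ * ((F y - F x - F' (y - x)) * (F y)⁻¹ʳ + F' (y - x) * ((F y)⁻¹ʳ - (F x)⁻¹ʳ))
      = -((F x)⁻¹ʳ * (F y - F x) * (F y)⁻¹ʳ) + (F x)⁻¹ʳ * F' (y - x) * (F x)⁻¹ʳ := by
        noncomm_ring
    _ = (F y)⁻¹ʳ - (F x)⁻¹ʳ - (-(mulLeftRight 𝕜 R (F x)⁻¹ʳ (F x)⁻¹ʳ ∘L F')) (y - x) := by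
        rw [hΔ, neg_apply, comp_apply, mulLeftRight_apply, sub_neg_eq_add]

theorem contDiff_ringInverse_comp {n : ℕ∞} (hF : ContDiff 𝕜 n F) (hU : ∀ y, IsUnit (F y)) :
    ContDiff 𝕜 n (fun y => (F y)⁻¹ʳ) := by
  refine contDiff_iff_forall_nat_le.2 fun m hm => ?_
  replace hF : ContDiff 𝕜 m F := hF.of_le (by exact_mod_cast hm)
  clear hm
  induction m with
  | zero =>
    exact contDiff_zero.2 <| continuous_iff_continuousAt.2 fun x =>
      continuousAt_ringInverse_comp hF.continuous.continuousAt (.of_forall hU)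
  | succ m ih =>
    have hG : ContDiff 𝕜 m (fun y => (F y)⁻¹ʳ) := ih (hF.of_le (by exact_mod_cast m.le_succ))
    push_cast at hF ⊢
    obtain ⟨hFd, -, hF'⟩ := contDiff_succ_iff_fderiv.1 hF
    have hderiv : ∀ x, HasFDerivAt (fun y => (F y)⁻¹ʳ) _ x := fun x =>
      hasFDerivAt_ringInverse_comp (hFd x).hasFDerivAt (.of_forall hU)
    have hGG : ContDiff 𝕜 m (fun x => mulLeftRight 𝕜 R (F x)⁻¹ʳ (F x)⁻¹ʳ) := by fun_prop
    exact contDiff_succ_iff_hasFDerivAt.2 ⟨_, (hGG.clm_comp hF').neg, hderiv⟩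

end RingInverse

/-- Linear differential operators of order at most two on `C²` functions, following Grothendieck:
the threefold commutator `[[[L, u], v], w]` with multiplication operators vanishes. The identity
below is its value at the constant function `1`. -/
def IsSecondOrder {E Λ : Type*} [NormedAddCommGroup E] [NormedSpace ℝ E] [NormedCommRing Λ]
    [NormedAlgebra ℝ Λ] (L : (E → Λ) → E → Λ) : Prop :=
  ∀ ⦃u v w : E → Λ⦄, ContDiff ℝ 2 u → ContDiff ℝ 2 v → ContDiff ℝ 2 w → ∀ x,
    L (u * v * w) x - u x * L (v * w) x - v x * L (u * w) x - w x * L (u * v) x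
      + u x * v x * L w x + u x * w x * L v x + v x * w x * L u x
      - u x * v x * w x * L 1 x = 0

section General

variable {E Λ : Type*} [NormedAddCommGroup E] [NormedSpace ℝ E] [NormedCommRing Λ]
  [NormedAlgebra ℝ Λ]

namespace IsSecondOrder

variable {L : (E → Λ) → E → Λ} {c u v : E → Λ}

theorem mul_apply_mul_of_mul_self_eq_zero (hL : IsSecondOrder L) (hc : ContDiff ℝ 2 c)
    (hu : ContDiff ℝ 2 u) (hc2 : ∀ x, c x * c x = 0) (x : E) :
    c x * L (c * u) x = c x * u x * L c x := by
  have hcc : c * c = 0 := funext hc2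
  have hL0 : L 0 x = 0 := by
    simpa using hL (u := 0) (v := 0) (w := 0) contDiff_const contDiff_const contDiff_const x
  have h := hL hc hc hu x
  rw [hcc, zero_mul, hL0, hc2] at h
  have h2 : (2 : ℝ) • (c x * L (c * u) x - c x * u x * L c x) = 0 := by
    rw [two_smul]
    linear_combination -h
  exact sub_eq_zero.1 ((smul_eq_zero_iff_right two_ne_zero).1 h2)

theorem mul_mul_apply_mul_congr (hL : IsSecondOrder L) (hc : ContDiff ℝ 2 c)
    (hu : ContDiff ℝ 2 u) (hv : ContDiff ℝ 2 v) (hc2 : ∀ x, c x * c x = 0) {x : E} {z : Λ}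
    (hz : z * u x = z * v x) : z * (c x * L (c * u) x) = z * (c x * L (c * v) x) := by
  rw [hL.mul_apply_mul_of_mul_self_eq_zero hc hu hc2,
    hL.mul_apply_mul_of_mul_self_eq_zero hc hv hc2]
  linear_combination c x * L c x * hz

end IsSecondOrder

open scoped Ring in
/-- The factors `1/2` of the paper are absorbed into `c` and `cb`, and `Wb` is `Ā X̄ + B̄`. -/
theorem X_expansion_general {A : (E → Λ) → E → Λ} (hA : IsSecondOrder A)
    {c cb B Wb f fb F Fb X Xb Y Yb : E → Λ}
    (hc : ContDiff ℝ 2 c) (hf : ContDiff ℝ 2 f) (hF : ContDiff ℝ 2 F)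
    (hc2 : ∀ x, c x * c x = 0) (hcb2 : ∀ x, cb x * cb x = 0)
    (hfU : ∀ x, IsUnit (f x)) (hfbU : ∀ x, IsUnit (fb x))
    (hFU : ∀ x, IsUnit (F x)) (hFbU : ∀ x, IsUnit (Fb x))
    (hX : ∀ x, X x = c x * (F x)⁻¹ʳ) (hXb : ∀ x, Xb x = cb x * (Fb x)⁻¹ʳ)
    (hY : ∀ x, Y x = -(c x * (f x)⁻¹ʳ)) (hYb : ∀ x, Yb x = -(cb x * (fb x)⁻¹ʳ))
    (heom : ∀ x, F x + f x = Xb x * (Fb x)⁻¹ʳ * (A X x + B x))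
    (heomb : ∀ x, Fb x + fb x = X x * (F x)⁻¹ʳ * Wb x) (x : E) :
    X x = Y x * (1 - (f x * fb x)⁻¹ʳ * (Yb x * (A Y x + B x))) := by
  have hcbF : cb x * (F x)⁻¹ʳ = -(cb x * (f x)⁻¹ʳ) := by
    refine mul_ringInverse_eq_neg_of_mul_add_eq_zero (hFU x) (hfU x) ?_
    rw [heom, hXb]
    linear_combination (Fb x)⁻¹ʳ * (Fb x)⁻¹ʳ * (A X x + B x) * hcb2 x
  have hcFb : c x * (Fb x)⁻¹ʳ = -(c x * (fb x)⁻¹ʳ) := by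
    refine mul_ringInverse_eq_neg_of_mul_add_eq_zero (hFbU x) (hfbU x) ?_
    rw [heomb, hX]
    linear_combination (F x)⁻¹ʳ * (F x)⁻¹ʳ * Wb x * hc2 x
  have hcbcA : cb x * (c x * A X x) = cb x * (c x * A Y x) := by
    rw [show X = c * fun y => (F y)⁻¹ʳ from funext hX,
      show Y = c * fun y => -(f y)⁻¹ʳ from funext fun y => (hY y).trans (mul_neg _ _).symm]
    exact hA.mul_mul_apply_mul_congr hc (contDiff_ringInverse_comp hF hFU)
      (contDiff_ringInverse_comp hf hfU).neg hc2 (hcbF.trans (mul_neg _ _).symm)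
  rw [hX, hY, hYb]
  refine mul_ringInverse_eq_of_add_eq_mul (hfU x) (hFU x) ?_ hcbF hcFb ?_
    (a := A X x + B x)
  · rw [heom, hXb]
  · linear_combination hcbcA

end General

section Flux

variable {V : Type*} [NormedAddCommGroup V] [NormedSpace ℝ V] {u v : (Fin 4 → ℝ) → V}

theorem pd_const (μ : Fin 4) (a : V) : pd μ (fun _ => a) = fun _ => 0 := by
  ext x
  simp [pd]

theorem pd_add {x : Fin 4 → ℝ} (hu : DifferentiableAt ℝ u x) (hv : DifferentiableAt ℝ v x)
    (μ : Fin 4) : pd μ (u + v) x = pd μ u x + pd μ v x := by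
  simp [pd, fderiv_add hu hv]

theorem differentiable_pd (hu : ContDiff ℝ 2 u) (μ : Fin 4) : Differentiable ℝ (pd μ u) :=
  ((hu.fderiv_right (m := 1) (by norm_num)).differentiable one_ne_zero).clm_apply
    (differentiable_const _)

/-- The densitized gradient `e g^{μν} ∂_ν u`, whose divergence is the principal part of `Aop`. -/
noncomputable def flux (e : (Fin 4 → ℝ) → ℝ) (g : (Fin 4 → ℝ) → Fin 4 → Fin 4 → ℝ) (μ : Fin 4)
    (u : (Fin 4 → ℝ) → V) : (Fin 4 → ℝ) → V :=
  fun x => e x • ∑ ν, g x μ ν • pd ν u x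

theorem flux_const (e : (Fin 4 → ℝ) → ℝ) (g : (Fin 4 → ℝ) → Fin 4 → Fin 4 → ℝ) (μ : Fin 4)
    (a : V) : flux e g μ (fun _ => a) = fun _ => 0 := by
  ext x
  simp [flux, pd_const]

theorem differentiable_flux {e : (Fin 4 → ℝ) → ℝ} {g : (Fin 4 → ℝ) → Fin 4 → Fin 4 → ℝ}
    (he : Differentiable ℝ e) (hg : Differentiable ℝ g) (hu : ContDiff ℝ 2 u) (μ : Fin 4) :
    Differentiable ℝ (flux e g μ u) := by
  have := differentiable_pd hu
  unfold flux
  fun_prop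

end Flux

section ProductRule

variable {Λ : Type*} [NormedCommRing Λ] [NormedAlgebra ℝ Λ] {u v w : (Fin 4 → ℝ) → Λ}

theorem pd_mul {x : Fin 4 → ℝ} (hu : DifferentiableAt ℝ u x) (hv : DifferentiableAt ℝ v x)
    (μ : Fin 4) : pd μ (u * v) x = u x * pd μ v x + v x * pd μ u x := by
  simp [pd, fderiv_mul hu hv]

theorem sum_smul_pd_mul {x : Fin 4 → ℝ} (b : Fin 4 → ℝ) (hu : DifferentiableAt ℝ u x)
    (hv : DifferentiableAt ℝ v x) :
    ∑ μ, b μ • pd μ (u * v) x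
      = u x * (∑ μ, b μ • pd μ v x) + v x * ∑ μ, b μ • pd μ u x := by
  simp only [pd_mul hu hv, smul_add, Finset.sum_add_distrib, Finset.mul_sum, mul_smul_comm]

/-- The carré du champ `g^{μν} (∂_μ u ∂_ν v + ∂_μ v ∂_ν u)`, the defect of `Aop` from being a
derivation up to zeroth-order terms. -/
noncomputable def carreDuChamp (g : (Fin 4 → ℝ) → Fin 4 → Fin 4 → ℝ) (u v : (Fin 4 → ℝ) → Λ) :
    (Fin 4 → ℝ) → Λ :=
  fun x => ∑ μ, ∑ ν, g x μ ν • (pd μ u x * pd ν v x + pd μ v x * pd ν u x)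

theorem carreDuChamp_mul_right {x : Fin 4 → ℝ} (g : (Fin 4 → ℝ) → Fin 4 → Fin 4 → ℝ)
    (hv : DifferentiableAt ℝ v x) (hw : DifferentiableAt ℝ w x) :
    carreDuChamp g u (v * w) x = v x * carreDuChamp g u w x + w x * carreDuChamp g u v x := by
  simp only [carreDuChamp, pd_mul hv hw, Finset.mul_sum, ← Finset.sum_add_distrib, mul_smul_comm,
    ← smul_add]
  refine Finset.sum_congr rfl fun μ _ => Finset.sum_congr rfl fun ν _ => ?_
  congr 1
  ring

variable {e : (Fin 4 → ℝ) → ℝ} {g : (Fin 4 → ℝ) → Fin 4 → Fin 4 → ℝ}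

theorem flux_mul (e : (Fin 4 → ℝ) → ℝ) (g : (Fin 4 → ℝ) → Fin 4 → Fin 4 → ℝ)
    (hu : Differentiable ℝ u) (hv : Differentiable ℝ v) (μ : Fin 4) :
    flux e g μ (u * v) = u * flux e g μ v + v * flux e g μ u := by
  ext x
  simp only [flux, pd_mul (hu x) (hv x), Pi.add_apply, Pi.mul_apply, mul_smul_comm,
    Finset.mul_sum, smul_add, Finset.sum_add_distrib]

theorem pd_flux_mul (he : Differentiable ℝ e) (hg : Differentiable ℝ g) (hu : ContDiff ℝ 2 u)
    (hv : ContDiff ℝ 2 v) (μ : Fin 4) (x : Fin 4 → ℝ) :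
    pd μ (flux e g μ (u * v)) x = u x * pd μ (flux e g μ v) x + v x * pd μ (flux e g μ u) x
      + (pd μ u x * flux e g μ v x + pd μ v x * flux e g μ u x) := by
  have hud : Differentiable ℝ u := hu.differentiable two_ne_zero
  have hvd : Differentiable ℝ v := hv.differentiable two_ne_zero
  have hfu := differentiable_flux he hg hu μ
  have hfv := differentiable_flux he hg hv μ
  rw [flux_mul e g hud hvd, pd_add ((hud.mul hfv) x) ((hvd.mul hfu) x), pd_mul (hud x) (hfv x),
    pd_mul (hvd x) (hfu x)]
  ring

theorem inv_smul_sum_pd_flux_mul (he : Differentiable ℝ e) (hg : Differentiable ℝ g)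
    (hu : ContDiff ℝ 2 u) (hv : ContDiff ℝ 2 v) {x : Fin 4 → ℝ} (hex : e x ≠ 0) :
    (e x)⁻¹ • ∑ μ, pd μ (flux e g μ (u * v)) x
      = u x * ((e x)⁻¹ • ∑ μ, pd μ (flux e g μ v) x)
        + v x * ((e x)⁻¹ • ∑ μ, pd μ (flux e g μ u) x) + carreDuChamp g u v x := by
  have hcross : (e x)⁻¹ • ∑ μ, (pd μ u x * flux e g μ v x + pd μ v x * flux e g μ u x)
      = carreDuChamp g u v x := by
    simp only [flux, carreDuChamp, mul_smul_comm, ← smul_add, ← Finset.smul_sum,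
      inv_smul_smul₀ hex, Finset.mul_sum, ← Finset.sum_add_distrib]
  simp_rw [pd_flux_mul he hg hu hv, ← hcross]
  rw [Finset.sum_add_distrib, Finset.sum_add_distrib, ← Finset.mul_sum, ← Finset.mul_sum,
    smul_add, smul_add, mul_smul_comm, mul_smul_comm]

end ProductRule

section Aop

variable {Λ : Type*} [NormedCommRing Λ] [NormedAlgebra ℂ Λ] {u v : (Fin 4 → ℝ) → Λ}
  {e : (Fin 4 → ℝ) → ℝ} {g : (Fin 4 → ℝ) → Fin 4 → Fin 4 → ℝ}

theorem Aop_apply (e : (Fin 4 → ℝ) → ℝ) (g : (Fin 4 → ℝ) → Fin 4 → Fin 4 → ℝ)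
    (t : (Fin 4 → ℝ) → Fin 4 → ℝ) (r : (Fin 4 → ℝ) → ℝ) (u : (Fin 4 → ℝ) → Λ) (x : Fin 4 → ℝ) :
    Aop e g t r u x = (e x)⁻¹ • ∑ μ, pd μ (flux e g μ u) x + Complex.I • ∑ μ, t x μ • pd μ u x
      + ((2 : ℝ)⁻¹ * (e x)⁻¹ * ∑ μ, fderiv ℝ (fun y => e y * t y μ) x (Pi.single μ 1)) •
        (Complex.I • u x) + r x • u x :=
  rfl

theorem Aop_one (e : (Fin 4 → ℝ) → ℝ) (g : (Fin 4 → ℝ) → Fin 4 → Fin 4 → ℝ)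
    (t : (Fin 4 → ℝ) → Fin 4 → ℝ) (r : (Fin 4 → ℝ) → ℝ) (x : Fin 4 → ℝ) :
    Aop e g t r (1 : (Fin 4 → ℝ) → Λ) x
      = ((2 : ℝ)⁻¹ * (e x)⁻¹ * ∑ μ, fderiv ℝ (fun y => e y * t y μ) x (Pi.single μ 1)) •
        (Complex.I • (1 : Λ)) + r x • (1 : Λ) := by
  change Aop e g t r (fun _ => (1 : Λ)) x = _
  simp only [Aop_apply, flux_const, pd_const, smul_zero, Finset.sum_const_zero, zero_add]

theorem Aop_mul (he : Differentiable ℝ e) (hg : Differentiable ℝ g)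
    (t : (Fin 4 → ℝ) → Fin 4 → ℝ) (r : (Fin 4 → ℝ) → ℝ) (hu : ContDiff ℝ 2 u)
    (hv : ContDiff ℝ 2 v) {x : Fin 4 → ℝ} (hex : e x ≠ 0) :
    Aop e g t r (u * v) x = u x * Aop e g t r v x + v x * Aop e g t r u x
      + carreDuChamp g u v x - u x * v x * Aop e g t r 1 x := by
  have hux : DifferentiableAt ℝ u x := hu.differentiable two_ne_zero x
  have hvx : DifferentiableAt ℝ v x := hv.differentiable two_ne_zero x
  rw [Aop_one]
  simp only [Aop_apply, inv_smul_sum_pd_flux_mul he hg hu hv hex, sum_smul_pd_mul _ hux hvx,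
    Pi.mul_apply]
  simp only [Algebra.smul_def]
  ring

theorem isSecondOrder_Aop (he : Differentiable ℝ e) (hg : Differentiable ℝ g) (he0 : ∀ x, e x ≠ 0)
    (t : (Fin 4 → ℝ) → Fin 4 → ℝ) (r : (Fin 4 → ℝ) → ℝ) :
    IsSecondOrder (Aop (Λ := Λ) e g t r) := by
  intro u v w hu hv hw x
  have hvd : Differentiable ℝ v := hv.differentiable two_ne_zero
  have hwd : Differentiable ℝ w := hw.differentiable two_ne_zero
  have hvw : ContDiff ℝ 2 (v * w) := hv.mul hw
  rw [mul_assoc u v w, Aop_mul he hg t r hu hvw (he0 x), Aop_mul he hg t r hv hw (he0 x),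
    Aop_mul he hg t r hu hw (he0 x), Aop_mul he hg t r hu hv (he0 x),
    carreDuChamp_mul_right g (hvd x) (hwd x), Pi.mul_apply]
  ring

end Aop

/-- **Eqs. (4.11)/(4.13).** The constrained scalar `X = χ²/(2F)` equals its
lowest-order value `Y = −χ²/(2f)` corrected by the single nilpotent factor
`𝒜 = (f f̄)⁻¹ Ȳ (A Y + B)`: one has `X = Y (1 − 𝒜)`. -/
theorem X_expansion
    {Λ : Type*} [NormedCommRing Λ] [NormedAlgebra ℂ Λ]
    (c cb B Bb f fb F Fb : (Fin 4 → ℝ) → Λ)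
    (t : (Fin 4 → ℝ) → Fin 4 → ℝ) (r : (Fin 4 → ℝ) → ℝ)
    (g : (Fin 4 → ℝ) → Fin 4 → Fin 4 → ℝ) (e : (Fin 4 → ℝ) → ℝ)
    -- smoothness of all data
    (hc : ContDiff ℝ (⊤ : ℕ∞) c) (hcb : ContDiff ℝ (⊤ : ℕ∞) cb)
    (hB : ContDiff ℝ (⊤ : ℕ∞) B) (hBb : ContDiff ℝ (⊤ : ℕ∞) Bb)
    (hf : ContDiff ℝ (⊤ : ℕ∞) f) (hfb : ContDiff ℝ (⊤ : ℕ∞) fb)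
    (hF : ContDiff ℝ (⊤ : ℕ∞) F) (hFb : ContDiff ℝ (⊤ : ℕ∞) Fb)
    (ht : ContDiff ℝ (⊤ : ℕ∞) t) (hr : ContDiff ℝ (⊤ : ℕ∞) r)
    (hg : ContDiff ℝ (⊤ : ℕ∞) g) (hgsym : ∀ x μ ν, g x μ ν = g x ν μ)
    (he : ContDiff ℝ (⊤ : ℕ∞) e) (he0 : ∀ x, e x ≠ 0)
    -- nilpotency of the fermion bilinears
    (hc2 : ∀ x, c x * c x = 0) (hcb2 : ∀ x, cb x * cb x = 0)
    -- invertibility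
    (hfU : ∀ x, IsUnit (f x)) (hfbU : ∀ x, IsUnit (fb x))
    (hFU : ∀ x, IsUnit (F x)) (hFbU : ∀ x, IsUnit (Fb x))
    -- the constrained scalars X = c/(2F), X̄ = c̄/(2F̄), Y = -c/(2f), Ȳ = -c̄/(2f̄)
    (X Xb Y Yb : (Fin 4 → ℝ) → Λ)
    (hX : ∀ x, X x = (2 : ℝ)⁻¹ • (c x * Ring.inverse (F x)))
    (hXb : ∀ x, Xb x = (2 : ℝ)⁻¹ • (cb x * Ring.inverse (Fb x)))
    (hY : ∀ x, Y x = -((2 : ℝ)⁻¹ • (c x * Ring.inverse (f x))))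
    (hYb : ∀ x, Yb x = -((2 : ℝ)⁻¹ • (cb x * Ring.inverse (fb x))))
    -- the auxiliary-field equations of motion (4.7):
    -- F + f = X̄ F̄⁻¹ (A X + B) and F̄ + f̄ = X F⁻¹ (Ā X̄ + B̄)
    (heom : ∀ x, F x + f x = Xb x * Ring.inverse (Fb x) * (Aop e g t r X x + B x))
    (heomb : ∀ x, Fb x + fb x =
      X x * Ring.inverse (F x) * (Aop e g (fun y μ => -(t y μ)) r Xb x + Bb x))
    :
    ∀ x, X x = Y x *
      (1 - Ring.inverse (f x * fb x) * (Yb x * (Aop e g t r Y x + B x))) := by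
  have hA : IsSecondOrder (Aop (Λ := Λ) e g t r) :=
    isSecondOrder_Aop (he.differentiable (by simp)) (hg.differentiable (by simp)) he0 t r
  have hc' : ContDiff ℝ 2 fun x => (2 : ℝ)⁻¹ • c x := (contDiff_infty.1 hc 2).const_smul _
  refine X_expansion_general hA hc' (contDiff_infty.1 hf 2) (contDiff_infty.1 hF 2)
    (cb := fun x => (2 : ℝ)⁻¹ • cb x) ?_ ?_ hfU hfbU hFU hFbU ?_ ?_ ?_ ?_ heom heomb
  all_goals simpa [smul_mul_smul_comm]
end

section
/- (Explicit rigid auxiliary field, eq. (3.21).) Under the stated rigid hypotheses, the auxiliary field is given pointwise on ℝ⁴ by F = −f · ( 1 + (1/(4f⁴))·c̄·(□c) − (3/(16f⁸))·c·c̄·(□c)·(□c̄) ), i.e. F(χ) = −f(1 + (χ̄²/(4f⁴))□χ² − (3/(16f⁸))χ²χ̄²(□χ²)(□χ̄²)). -/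
open scoped BigOperators

/-- The flat d'Alembertian `□u = η^{μν} ∂_μ ∂_ν u` with `η = diag(−1,1,1,1)`. -/
noncomputable def box {Λ : Type*} [NormedAddCommGroup Λ] [NormedSpace ℝ Λ]
    (u : (Fin 4 → ℝ) → Λ) : (Fin 4 → ℝ) → Λ :=
  fun x => ∑ μ : Fin 4, (if μ = 0 then (-1 : ℝ) else 1) • pd μ (pd μ u) x

/-! Since `X̄` is a multiple of `χ̄²`, the equation of motion gives `F + f = m` with `m` a multiple
of the square-zero `χ̄²`; hence `F⁻¹ = -f⁻¹ - f⁻² m` exactly, and `X` is affine in `m`.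
Differentiating the relation `χ̄² m = 0` twice moves the d'Alembertian off `m`:
`χ̄² □(χ² m) = χ² m □χ̄²`. The two equations of motion thereby become algebraic in `m` and its
conjugate `m̄`, and nilpotency ends the recursion after one substitution. -/

section DirectionalDerivative

variable {𝕜 E A : Type*} [NontriviallyNormedField 𝕜] [NormedAddCommGroup E] [NormedSpace 𝕜 E]

/-- The derivative `∂_v u` of `u` in the direction `v`, again as a function; `pd i` is the case of
the `i`-th coordinate vector. -/
noncomputable def dirDeriv (𝕜 : Type*) {E A : Type*} [NontriviallyNormedField 𝕜]
    [NormedAddCommGroup E] [NormedSpace 𝕜 E] [NormedAddCommGroup A] [NormedSpace 𝕜 A]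
    (v : E) (u : E → A) : E → A :=
  fun x ↦ fderiv 𝕜 u x v

/-- The homogeneous second-order operator `∑ μ, η μ ∂_{v μ}²` with constant coefficients; `box` is
the case of the Minkowski signature and the standard basis. -/
noncomputable def waveOp {ι 𝕜 E A : Type*} [Fintype ι] [NontriviallyNormedField 𝕜]
    [NormedAddCommGroup E] [NormedSpace 𝕜 E] [NormedAddCommGroup A] [NormedSpace 𝕜 A]
    (η : ι → 𝕜) (v : ι → E) (u : E → A) : E → A :=
  fun x ↦ ∑ μ, η μ • dirDeriv 𝕜 (v μ) (dirDeriv 𝕜 (v μ) u) x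

section Linear

variable [NormedAddCommGroup A] [NormedSpace 𝕜 A] {u w : E → A}

theorem contDiff_dirDeriv {m n : WithTop ℕ∞} (v : E) (hu : ContDiff 𝕜 n u) (hmn : m + 1 ≤ n) :
    ContDiff 𝕜 m (dirDeriv 𝕜 v u) :=
  (hu.fderiv_right hmn).clm_apply contDiff_const

theorem differentiable_dirDeriv (v : E) (hu : ContDiff 𝕜 2 u) :
    Differentiable 𝕜 (dirDeriv 𝕜 v u) :=
  (contDiff_dirDeriv v hu one_add_one_eq_two.le).differentiable one_ne_zero

theorem dirDeriv_add (v : E) (hu : Differentiable 𝕜 u) (hw : Differentiable 𝕜 w) :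
    dirDeriv 𝕜 v (u + w) = dirDeriv 𝕜 v u + dirDeriv 𝕜 v w := by
  ext x
  simp [dirDeriv, fderiv_add (hu x) (hw x)]

theorem dirDeriv_const_smul (v : E) (k : 𝕜) (hu : Differentiable 𝕜 u) :
    dirDeriv 𝕜 v (k • u) = k • dirDeriv 𝕜 v u := by
  ext x
  simp [dirDeriv, fderiv_const_smul (hu x)]

variable {ι : Type*} [Fintype ι] (η : ι → 𝕜) (v : ι → E)

theorem waveOp_add (hu : ContDiff 𝕜 2 u) (hw : ContDiff 𝕜 2 w) :
    waveOp η v (u + w) = waveOp η v u + waveOp η v w := by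
  ext x
  simp [waveOp, dirDeriv_add, hu.differentiable two_ne_zero, hw.differentiable two_ne_zero,
    differentiable_dirDeriv, hu, hw, Finset.sum_add_distrib]

theorem waveOp_const_smul (k : 𝕜) (hu : ContDiff 𝕜 2 u) :
    waveOp η v (k • u) = k • waveOp η v u := by
  ext x
  simp [waveOp, dirDeriv_const_smul, hu.differentiable two_ne_zero, differentiable_dirDeriv, hu,
    Finset.smul_sum, smul_comm k]

end Linear

section Product

variable [NormedCommRing A] [NormedAlgebra 𝕜 A] {u w : E → A}

theorem dirDeriv_mul (v : E) (hu : Differentiable 𝕜 u) (hw : Differentiable 𝕜 w) :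
    dirDeriv 𝕜 v (u * w) = u * dirDeriv 𝕜 v w + dirDeriv 𝕜 v u * w := by
  ext x
  simp [dirDeriv, fderiv_mul (hu x) (hw x), mul_comm]

theorem dirDeriv_dirDeriv_mul (v : E) (hu : ContDiff 𝕜 2 u) (hw : ContDiff 𝕜 2 w) :
    dirDeriv 𝕜 v (dirDeriv 𝕜 v (u * w)) =
      u * dirDeriv 𝕜 v (dirDeriv 𝕜 v w) + 2 * (dirDeriv 𝕜 v u * dirDeriv 𝕜 v w) +
        dirDeriv 𝕜 v (dirDeriv 𝕜 v u) * w := by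
  have du := hu.differentiable two_ne_zero
  have dw := hw.differentiable two_ne_zero
  have du' := differentiable_dirDeriv v hu
  have dw' := differentiable_dirDeriv v hw
  rw [dirDeriv_mul v du dw, dirDeriv_add v (du.mul dw') (du'.mul dw), dirDeriv_mul v du dw',
    dirDeriv_mul v du' dw]
  ring

theorem mul_dirDeriv_eq_neg_of_mul_eq_zero (v : E) (hu : Differentiable 𝕜 u)
    (hw : Differentiable 𝕜 w) (h : u * w = 0) :
    u * dirDeriv 𝕜 v w = -(dirDeriv 𝕜 v u * w) := by
  rw [eq_neg_iff_add_eq_zero, ← dirDeriv_mul v hu hw, h]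
  ext x
  simp [dirDeriv]

end Product

end DirectionalDerivative

section SquareZero

theorem mul_eq_zero_of_dvd {R : Type*} [SemigroupWithZero R] {b m : R}
    (hb2 : b * b = 0) (hbm : b ∣ m) : b * m = 0 := by
  obtain ⟨s, rfl⟩ := hbm
  rw [← mul_assoc, hb2, zero_mul]

theorem mul_self_eq_zero_of_dvd {R : Type*} [CommMonoidWithZero R] {b m : R}
    (hb2 : b * b = 0) (hbm : b ∣ m) : m * m = 0 :=
  zero_dvd_iff.1 (hb2 ▸ mul_dvd_mul hbm hbm)

theorem ringInverse_sub_algebraMap {𝕜 R : Type*} [Field 𝕜] [Ring R] [Algebra 𝕜 R] {f : 𝕜}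
    (hf : f ≠ 0) {m : R} (hm : m * m = 0) :
    Ring.inverse (m - algebraMap 𝕜 R f) = -(f⁻¹ • 1 + f⁻¹ ^ 2 • m) := by
  refine Ring.inverse_unit ⟨m - algebraMap 𝕜 R f, -(f⁻¹ • 1 + f⁻¹ ^ 2 • m), ?_, ?_⟩ <;>
    simp [Algebra.algebraMap_eq_smul_one, mul_add, add_mul, sub_mul, mul_sub, smul_smul, smul_sub,
      hm, hf, pow_two]

variable {𝕜 E A : Type*} [NontriviallyNormedField 𝕜] [NeZero (2 : 𝕜)] [NormedAddCommGroup E]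
  [NormedSpace 𝕜 E] [NormedCommRing A] [NormedAlgebra 𝕜 A] {a b m : E → A}

theorem mul_dirDeriv_self_of_mul_self_eq_zero (v : E) (hb : Differentiable 𝕜 b)
    (hb2 : b * b = 0) : b * dirDeriv 𝕜 v b = 0 := by
  have h := mul_dirDeriv_eq_neg_of_mul_eq_zero v hb hb hb2
  rw [mul_comm (dirDeriv 𝕜 v b), eq_neg_iff_add_eq_zero, ← two_smul 𝕜] at h
  exact (smul_eq_zero_iff_right two_ne_zero).1 h

theorem dirDeriv_mul_eq_zero_of_dvd (v : E) (hb : Differentiable 𝕜 b) (hb2 : b * b = 0)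
    (hbm : b ∣ m) : dirDeriv 𝕜 v b * m = 0 := by
  obtain ⟨s, rfl⟩ := hbm
  rw [← mul_assoc, mul_comm (dirDeriv 𝕜 v b),
    mul_dirDeriv_self_of_mul_self_eq_zero v hb hb2, zero_mul]

theorem mul_dirDeriv_eq_zero_of_dvd (v : E) (hb : Differentiable 𝕜 b) (hm : Differentiable 𝕜 m)
    (hb2 : b * b = 0) (hbm : b ∣ m) : b * dirDeriv 𝕜 v m = 0 := by
  have hbm0 : b * m = 0 := mul_eq_zero_of_dvd hb2 hbm
  rw [mul_dirDeriv_eq_neg_of_mul_eq_zero v hb hm hbm0, dirDeriv_mul_eq_zero_of_dvd v hb hb2 hbm,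
    neg_zero]

theorem mul_dirDeriv_dirDeriv_of_dvd (v : E) (hb : ContDiff 𝕜 2 b) (hm : ContDiff 𝕜 2 m)
    (hb2 : b * b = 0) (hbm : b ∣ m) :
    b * dirDeriv 𝕜 v (dirDeriv 𝕜 v m) = dirDeriv 𝕜 v (dirDeriv 𝕜 v b) * m := by
  have db := hb.differentiable two_ne_zero
  have dm := hm.differentiable two_ne_zero
  calc b * dirDeriv 𝕜 v (dirDeriv 𝕜 v m)
      = -(dirDeriv 𝕜 v b * dirDeriv 𝕜 v m) :=
        mul_dirDeriv_eq_neg_of_mul_eq_zero v db (differentiable_dirDeriv v hm)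
          (mul_dirDeriv_eq_zero_of_dvd v db dm hb2 hbm)
    _ = dirDeriv 𝕜 v (dirDeriv 𝕜 v b) * m := by
        rw [mul_dirDeriv_eq_neg_of_mul_eq_zero v (differentiable_dirDeriv v hb) dm
          (dirDeriv_mul_eq_zero_of_dvd v db hb2 hbm), neg_neg]

theorem mul_dirDeriv_dirDeriv_mul_of_dvd (v : E) (ha : ContDiff 𝕜 2 a) (hb : ContDiff 𝕜 2 b)
    (hm : ContDiff 𝕜 2 m) (hb2 : b * b = 0) (hbm : b ∣ m) :
    b * dirDeriv 𝕜 v (dirDeriv 𝕜 v (a * m)) = a * m * dirDeriv 𝕜 v (dirDeriv 𝕜 v b) := by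
  have hbm0 : b * m = 0 := mul_eq_zero_of_dvd hb2 hbm
  have hbm1 : b * dirDeriv 𝕜 v m = 0 := mul_dirDeriv_eq_zero_of_dvd v
    (hb.differentiable two_ne_zero) (hm.differentiable two_ne_zero) hb2 hbm
  rw [dirDeriv_dirDeriv_mul v ha hm]
  linear_combination a * mul_dirDeriv_dirDeriv_of_dvd v hb hm hb2 hbm +
    2 * dirDeriv 𝕜 v a * hbm1 + dirDeriv 𝕜 v (dirDeriv 𝕜 v a) * hbm0

theorem mul_waveOp_mul_of_dvd {ι : Type*} [Fintype ι] (η : ι → 𝕜) (v : ι → E)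
    (ha : ContDiff 𝕜 2 a) (hb : ContDiff 𝕜 2 b) (hm : ContDiff 𝕜 2 m)
    (hb2 : b * b = 0) (hbm : b ∣ m) :
    b * waveOp η v (a * m) = a * m * waveOp η v b := by
  ext x
  have h μ := congrFun (mul_dirDeriv_dirDeriv_mul_of_dvd (v μ) ha hb hm hb2 hbm) x
  simp only [Pi.mul_apply] at h
  simp only [Pi.mul_apply, waveOp, Finset.mul_sum, mul_smul_comm, h]

end SquareZero

section ConstrainedScalar

variable {𝕜 E A : Type*} [Field 𝕜] [CommRing A] [Algebra 𝕜 A]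

/-- The scalar `X = c / (2 F)` of the constrained multiplet with fermion bilinear `c` and auxiliary
field `F`. It takes the junk value `0` wherever `F` is not invertible. -/
noncomputable def constrainedScalar (𝕜 : Type*) {E A : Type*} [Field 𝕜] [Ring A] [Algebra 𝕜 A]
    (c F : E → A) : E → A :=
  fun x ↦ (2 : 𝕜)⁻¹ • (c x * Ring.inverse (F x))

theorem dvd_constrainedScalar (c F : E → A) : c ∣ constrainedScalar 𝕜 c F :=
  ⟨fun x ↦ (2 : 𝕜)⁻¹ • Ring.inverse (F x), funext fun _ ↦ (mul_smul_comm _ _ _).symm⟩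

theorem constrainedScalar_sub_algebraMap {f : 𝕜} {m : E → A} (c : E → A) (hf : f ≠ 0)
    (hm : m * m = 0) :
    constrainedScalar 𝕜 c (m - algebraMap 𝕜 (E → A) f) =
      (-2⁻¹ : 𝕜) • (f⁻¹ • c + f⁻¹ ^ 2 • (c * m)) := by
  ext x
  have hF := ringInverse_sub_algebraMap hf (congrFun hm x)
  simp only [constrainedScalar, Pi.sub_apply, Pi.algebraMap_apply, hF, Pi.smul_apply,
    Pi.add_apply, Pi.mul_apply]
  algebra

end ConstrainedScalar

theorem eq_of_coupled_auxiliary_eom {R S : Type*} [CommRing R] [CommRing S] [Algebra R S]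
    {f e : R} {c cb a ab m n : S} (hc2 : c * c = 0) (hcb2 : cb * cb = 0) (hcbm : cb * m = 0)
    (hcn : c * n = 0) (hm : m = -e • (f • (cb * a) + c * m * ab + 2 * (n * (cb * a))))
    (hn : n = -e • (f • (c * ab) + cb * n * a + 2 * (m * (c * ab)))) :
    m = -f • (e • (cb * a) - (3 * e ^ 2) • (c * cb * a * ab)) := by
  have hcm : c * m = -(f * e) • (c * cb * a) := by
    linear_combination (norm := algebra) c * hm - e • (m * ab) * hc2 - e • (2 * cb * a) * hcn
  have hcbn : cb * n = -(f * e) • (c * cb * ab) := by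
    linear_combination (norm := algebra) cb * hn - e • (n * a) * hcb2 - e • (2 * c * ab) * hcbm
  linear_combination (norm := algebra) hm - e • ab * hcm - e • (2 * a) * hcbn

section AuxiliaryField

variable {ι 𝕜 E A : Type*} [Fintype ι] [NontriviallyNormedField 𝕜] [NeZero (2 : 𝕜)]
  [NormedAddCommGroup E] [NormedSpace 𝕜 E] [NormedCommRing A] [NormedAlgebra 𝕜 A]
  {f : 𝕜} {c cb m n : E → A}

theorem mul_waveOp_constrainedScalar (η : ι → 𝕜) (v : ι → E) (hf : f ≠ 0) (hc : ContDiff 𝕜 2 c)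
    (hcb : ContDiff 𝕜 2 cb) (hm : ContDiff 𝕜 2 m) (hcb2 : cb * cb = 0) (hcbm : cb ∣ m) :
    cb * waveOp η v (constrainedScalar 𝕜 c (m - algebraMap 𝕜 (E → A) f)) =
      (-2⁻¹ : 𝕜) • (f⁻¹ • (cb * waveOp η v c) + f⁻¹ ^ 2 • (c * m * waveOp η v cb)) := by
  have hcm : ContDiff 𝕜 2 (c * m) := hc.mul hm
  have hc' : ContDiff 𝕜 2 (f⁻¹ • c) := hc.const_smul f⁻¹
  have hcm' : ContDiff 𝕜 2 (f⁻¹ ^ 2 • (c * m)) := hcm.const_smul (f⁻¹ ^ 2)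
  have hsum : ContDiff 𝕜 2 (f⁻¹ • c + f⁻¹ ^ 2 • (c * m)) := hc'.add hcm'
  rw [constrainedScalar_sub_algebraMap c hf (mul_self_eq_zero_of_dvd hcb2 hcbm),
    waveOp_const_smul η v _ hsum, waveOp_add η v hc' hcm', waveOp_const_smul η v _ hc,
    waveOp_const_smul η v _ hcm, mul_smul_comm, mul_add, mul_smul_comm, mul_smul_comm,
    mul_waveOp_mul_of_dvd η v hc hcb hm hcb2 hcbm]

theorem eq_smul_of_auxiliary_eom (η : ι → 𝕜) (v : ι → E) (hf : f ≠ 0) (hc : ContDiff 𝕜 2 c)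
    (hcb : ContDiff 𝕜 2 cb) (hm : ContDiff 𝕜 2 m) (hc2 : c * c = 0) (hcb2 : cb * cb = 0)
    (hcn : c ∣ n)
    (heom : m = constrainedScalar 𝕜 cb (n - algebraMap 𝕜 (E → A) f) *
      (fun x ↦ Ring.inverse (n x - algebraMap 𝕜 A f)) *
        waveOp η v (constrainedScalar 𝕜 c (m - algebraMap 𝕜 (E → A) f))) :
    m = -(4 * f ^ 4)⁻¹ • (f • (cb * waveOp η v c) + c * m * waveOp η v cb +
      2 * (n * (cb * waveOp η v c))) := by
  have hcbm : cb ∣ m := heom ▸ ((dvd_constrainedScalar cb _).mul_right _).mul_right _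
  have hn2 : n * n = 0 := mul_self_eq_zero_of_dvd hc2 hcn
  have hcn0 : c * n = 0 := mul_eq_zero_of_dvd hc2 hcn
  have hbox := mul_waveOp_constrainedScalar η v hf hc hcb hm hcb2 hcbm
  have hinv : (fun x ↦ Ring.inverse (n x - algebraMap 𝕜 A f)) = -(f⁻¹ • 1 + f⁻¹ ^ 2 • n) :=
    funext fun x ↦ ringInverse_sub_algebraMap hf (congrFun hn2 x)
  rw [constrainedScalar_sub_algebraMap cb hf hn2, hinv] at heom
  generalize waveOp η v (constrainedScalar 𝕜 c (m - algebraMap 𝕜 (E → A) f)) = Y at heom hbox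
  have h4 : (4 * f ^ 4)⁻¹ = 2⁻¹ ^ 2 * f⁻¹ ^ 4 := by
    rw [mul_inv, show (4 : 𝕜) = 2 ^ 2 by norm_num, inv_pow, inv_pow]
  have h3 : f * (2⁻¹ ^ 2 * f⁻¹ ^ 4) = 2⁻¹ ^ 2 * f⁻¹ ^ 3 := by field_simp
  rw [h4, neg_smul, smul_add, smul_add, smul_smul, mul_comm _ f, h3]
  linear_combination (norm := algebra) heom + (2 : 𝕜)⁻¹ • (f⁻¹ ^ 2 • 1 + (2 * f⁻¹ ^ 3) • n) * hbox
    + ((2 : 𝕜)⁻¹ * f⁻¹ ^ 4) • (cb * Y) * hn2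
    - (2 * (2 : 𝕜)⁻¹ ^ 2 * f⁻¹ ^ 5) • (m * waveOp η v cb) * hcn0

theorem rigid_auxiliary_field_general (η : ι → 𝕜) (v : ι → E) (hf : f ≠ 0) {F Fb X Xb : E → A}
    (hc : ContDiff 𝕜 2 c) (hcb : ContDiff 𝕜 2 cb) (hF : ContDiff 𝕜 2 F) (hFb : ContDiff 𝕜 2 Fb)
    (hc2 : ∀ x, c x * c x = 0) (hcb2 : ∀ x, cb x * cb x = 0)
    (hX : ∀ x, X x = (2 : 𝕜)⁻¹ • (c x * Ring.inverse (F x)))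
    (hXb : ∀ x, Xb x = (2 : 𝕜)⁻¹ • (cb x * Ring.inverse (Fb x)))
    (heom : ∀ x, F x + algebraMap 𝕜 A f = Xb x * Ring.inverse (Fb x) * waveOp η v X x)
    (heomb : ∀ x, Fb x + algebraMap 𝕜 A f = X x * Ring.inverse (F x) * waveOp η v Xb x) (x : E) :
    F x = (-f) • ((1 : A) + (4 * f ^ 4)⁻¹ • (cb x * waveOp η v c x) -
      (3 / (16 * f ^ 8)) • (c x * cb x * waveOp η v c x * waveOp η v cb x)) := by
  obtain ⟨m, rfl⟩ : ∃ m, F = m - algebraMap 𝕜 (E → A) f := ⟨F + algebraMap 𝕜 _ f, by simp⟩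
  obtain ⟨n, rfl⟩ : ∃ n, Fb = n - algebraMap 𝕜 (E → A) f := ⟨Fb + algebraMap 𝕜 _ f, by simp⟩
  obtain rfl : X = constrainedScalar 𝕜 c (m - algebraMap 𝕜 (E → A) f) := funext hX
  obtain rfl : Xb = constrainedScalar 𝕜 cb (n - algebraMap 𝕜 (E → A) f) := funext hXb
  simp only [Pi.sub_apply, Pi.algebraMap_apply, sub_add_cancel] at heom heomb
  replace heom := funext heom
  replace heomb := funext heomb
  replace hc2 : c * c = 0 := funext hc2
  replace hcb2 : cb * cb = 0 := funext hcb2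
  have hm : ContDiff 𝕜 2 m := by simpa using hF.add (contDiff_const (c := algebraMap 𝕜 A f))
  have hn : ContDiff 𝕜 2 n := by simpa using hFb.add (contDiff_const (c := algebraMap 𝕜 A f))
  have hcbm : cb ∣ m := heom ▸ ((dvd_constrainedScalar cb _).mul_right _).mul_right _
  have hcn : c ∣ n := heomb ▸ ((dvd_constrainedScalar c _).mul_right _).mul_right _
  have hmx := congrFun (eq_of_coupled_auxiliary_eom hc2 hcb2 (mul_eq_zero_of_dvd hcb2 hcbm)
    (mul_eq_zero_of_dvd hc2 hcn) (eq_smul_of_auxiliary_eom η v hf hc hcb hm hc2 hcb2 hcn heom)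
    (eq_smul_of_auxiliary_eom η v hf hcb hc hn hcb2 hc2 hcbm heomb)) x
  have hcoeff : 3 / (16 * f ^ 8) = 3 * (4 * f ^ 4)⁻¹ ^ 2 := by
    rw [inv_pow, mul_pow, ← pow_mul, div_eq_mul_inv]
    norm_num
  simp only [Pi.sub_apply, Pi.smul_apply, Pi.mul_apply] at hmx
  rw [Pi.sub_apply, hmx, Pi.algebraMap_apply, hcoeff]
  algebra

end AuxiliaryField

/-- **Eq. (3.21).** Explicit rigid auxiliary field:
`F = −f (1 + (χ̄²/(4f⁴)) □χ² − (3/(16f⁸)) χ² χ̄² (□χ²)(□χ̄²))`. -/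
theorem rigid_auxiliary_field
    {Λ : Type*} [NormedCommRing Λ] [NormedAlgebra ℝ Λ]
    (f : ℝ) (hf0 : f ≠ 0)
    (c cb F Fb : (Fin 4 → ℝ) → Λ)
    (hc : ContDiff ℝ (⊤ : ℕ∞) c) (hcb : ContDiff ℝ (⊤ : ℕ∞) cb)
    (hF : ContDiff ℝ (⊤ : ℕ∞) F) (hFb : ContDiff ℝ (⊤ : ℕ∞) Fb)
    -- nilpotency of the fermion bilinears χ², χ̄²
    (hc2 : ∀ x, c x * c x = 0) (hcb2 : ∀ x, cb x * cb x = 0)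
    -- invertibility of the auxiliary fields
    (hFU : ∀ x, IsUnit (F x)) (hFbU : ∀ x, IsUnit (Fb x))
    -- the constrained scalars X = χ²/(2F), X̄ = χ̄²/(2F̄)
    (X Xb : (Fin 4 → ℝ) → Λ)
    (hX : ∀ x, X x = (2 : ℝ)⁻¹ • (c x * Ring.inverse (F x)))
    (hXb : ∀ x, Xb x = (2 : ℝ)⁻¹ • (cb x * Ring.inverse (Fb x)))
    -- the auxiliary-field equations of motion:
    -- F + f = X̄ F̄⁻¹ (□X) and F̄ + f = X F⁻¹ (□X̄)
    (heom : ∀ x, F x + algebraMap ℝ Λ f = Xb x * Ring.inverse (Fb x) * box X x)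
    (heomb : ∀ x, Fb x + algebraMap ℝ Λ f = X x * Ring.inverse (F x) * box Xb x)
    :
    ∀ x, F x = (-f) • ((1 : Λ) + (4 * f ^ 4)⁻¹ • (cb x * box c x)
      - (3 / (16 * f ^ 8)) • (c x * cb x * box c x * box cb x)) :=
  rigid_auxiliary_field_general (fun μ ↦ if μ = 0 then (-1 : ℝ) else 1) (Pi.single · 1) hf0
    (contDiff_infty.1 hc 2) (contDiff_infty.1 hcb 2) (contDiff_infty.1 hF 2)
    (contDiff_infty.1 hFb 2) hc2 hcb2 hX hXb heom heomb
end
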